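/- Let G be a finite undirected multigraph and A an Abelian group. If a function f:E→A, extended F₂-linearly to subsets of E, takes every element of the Cycle Space of G to 0, then f is balanced. Conversely, if f:E→A is balanced, then f takes every element of the Cycle Space of G to 0 and takes every element of the 3-Weak Cycle Space of G to an element of A₂ (the subgroup of elements a∈A with 2a=0). -/

import Mathlib

open Finset

/-- A finite undirected multigraph: each edge `e : E` has an unordered pair of
endpoints `ends e : Sym2 V`.  Loops and parallel edges are allowed and the graph
need not be connected. -/
structure Multigraph (V E : Type*) where
  ends : E → Sym2 V

namespace Multigraph

variable {V E : Type*}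

/-- `G.IsChain x y p` : `p` is an alternating sequence `v₁,e₁,…,vₙ,eₙ` (encoded as a
list of vertex-edge pairs) which forms a walk from `x` to `y` (the final vertex `y`
is omitted, i.e. this is "truncated"). -/
def IsChain (G : Multigraph V E) : V → V → List (V × E) → Prop
  | x, y, [] => x = y
  | x, y, (v, e) :: rest => v = x ∧ ∃ w, G.ends e = s(x, w) ∧ G.IsChain w y rest

/-- A truncated trail (ttrail) from `x` to `y`: an alternating walk with no repeated
edges, final vertex omitted. -/
def IsTtrail (G : Multigraph V E) (x y : V) (p : List (V × E)) : Prop :=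
  G.IsChain x y p ∧ (p.map Prod.snd).Nodup

/-- A cycle: a closed ttrail with no repeated vertices. -/
def IsCycle (G : Multigraph V E) (x : V) (p : List (V × E)) : Prop :=
  G.IsTtrail x x p ∧ (p.map Prod.fst).Nodup

/-- Two ttrails are edge-disjoint if they have no common edges. -/
def EdgeDisjoint (p q : List (V × E)) : Prop :=
  ∀ e, e ∈ p.map Prod.snd → e ∉ q.map Prod.snd

/-- `k`-edge-connectivity: two distinct vertices are `k`-edge-connected if there are
`k` pairwise edge-disjoint ttrails between them; every vertex is `k`-edge-connected
to itself. -/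
def KConn (G : Multigraph V E) (k : ℕ) (v w : V) : Prop :=
  v = w ∨ ∃ p : Fin k → List (V × E),
    (∀ i, G.IsTtrail v w (p i)) ∧ ∀ i j, i ≠ j → EdgeDisjoint (p i) (p j)

/-- `conk G k` : the number of equivalence classes of `k`-edge-connected vertices. -/
noncomputable def conk (G : Multigraph V E) (k : ℕ) : ℕ :=
  Nat.card (Quotient (Relation.EqvGen.setoid (G.KConn k)))

/-- The number of connected components of `G`. -/
noncomputable def con (G : Multigraph V E) : ℕ := G.conk 1

section Homology

variable [Fintype V] [Fintype E] [DecidableEq V] [DecidableEq E]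

/-- The vector in `F₂^V` which is the sum of the two endpoints of the edge `e`
(so a loop is sent to `0`). -/
def edgeVec (G : Multigraph V E) (e : E) : V → ZMod 2 := fun v =>
  Sym2.lift ⟨fun a b => (if v = a then (1 : ZMod 2) else 0) + (if v = b then 1 else 0),
    fun _ _ => add_comm _ _⟩ (G.ends e)

/-- The boundary map `δ : F₂^E → F₂^V`, sending each edge to the sum of its two
adjacent vertices. -/
def boundary (G : Multigraph V E) : (E → ZMod 2) →ₗ[ZMod 2] (V → ZMod 2) where
  toFun c := fun v => ∑ e, c e * G.edgeVec e v
  map_add' c d := by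
    funext v
    simp [add_mul, Finset.sum_add_distrib]
  map_smul' r c := by
    funext v
    simp [Finset.mul_sum, mul_assoc]

/-- The Cycle Space of `G` : the kernel of the boundary map. -/
def cycleSpace (G : Multigraph V E) : Submodule (ZMod 2) (E → ZMod 2) :=
  LinearMap.ker G.boundary

/-- The indicator vector of a vertex in `F₂^V`. -/
def vert (v : V) : V → ZMod 2 := fun w => if w = v then 1 else 0

/-- A `k`-weak homological cycle: a homological path between two `k`-edge-connected
vertices. -/
def IsWeakCycle (G : Multigraph V E) (k : ℕ) (c : E → ZMod 2) : Prop :=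
  ∃ v w, G.KConn k v w ∧ G.boundary c = vert v + vert w

/-- The `k`-Weak Cycle Space: the span of all `k`-weak homological cycles. -/
def weakCycleSpace (G : Multigraph V E) (k : ℕ) : Submodule (ZMod 2) (E → ZMod 2) :=
  Submodule.span (ZMod 2) {c | G.IsWeakCycle k c}

/-- `eps p` : the set of edges of the ttrail `p`, as a vector in `F₂^E`. -/
def eps (p : List (V × E)) : E → ZMod 2 := fun e => if e ∈ p.map Prod.snd then 1 else 0

/-- The `F₂`-linear extension of `f : E → A` to subsets of `E`: the sum of `f` over
the edges of the subset `S`. -/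
def fSum {A : Type*} [AddCommGroup A] (f : E → A) (S : E → ZMod 2) : A :=
  ∑ e ∈ Finset.univ.filter fun e => S e = 1, f e

end Homology

section Balanced

variable {A : Type*} [AddCommGroup A]

/-- The sum `g(v₁)+f(e₁)+…+g(vₙ)+f(eₙ)` of the values of a vertex-function `g` and an
edge-function `f` along a ttrail `v₁,e₁,…,vₙ,eₙ`. -/
def pathSum (g : V → A) (f : E → A) (p : List (V × E)) : A :=
  (p.map fun ve => g ve.1 + f ve.2).sum

/-- The sum `h(v₁)+h(e₁)+…+h(vₙ)+h(eₙ)` of the values of `h : V ∪ E → A` along a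
ttrail `v₁,e₁,…,vₙ,eₙ`. -/
def wSum (h : V ⊕ E → A) (p : List (V × E)) : A :=
  (p.map fun ve => h (Sum.inl ve.1) + h (Sum.inr ve.2)).sum

lemma pathSum_cons (g : V → A) (f : E → A) (a : V × E) (t : List (V × E)) :
    pathSum g f (a :: t) = (g a.1 + f a.2) + pathSum g f t := by
  simp [pathSum]

lemma pathSum_zero (p : List (V × E)) : pathSum (0 : V → A) (0 : E → A) p = 0 := by
  induction p with
  | nil => simp [pathSum]
  | cons a t ih => simp [pathSum_cons, ih]

lemma pathSum_add (g g' : V → A) (f f' : E → A) (p : List (V × E)) :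
    pathSum (g + g') (f + f') p = pathSum g f p + pathSum g' f' p := by
  induction p with
  | nil => simp [pathSum]
  | cons a t ih => simp only [pathSum_cons, Pi.add_apply, ih]; abel

lemma pathSum_neg (g : V → A) (f : E → A) (p : List (V × E)) :
    pathSum (-g) (-f) p = -pathSum g f p := by
  induction p with
  | nil => simp [pathSum]
  | cons a t ih => simp only [pathSum_cons, Pi.neg_apply, ih]; abel

lemma wSum_cons (h : V ⊕ E → A) (a : V × E) (t : List (V × E)) :
    wSum h (a :: t) = (h (Sum.inl a.1) + h (Sum.inr a.2)) + wSum h t := by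
  simp [wSum]

lemma wSum_zero (p : List (V × E)) : wSum (0 : V ⊕ E → A) p = 0 := by
  induction p with
  | nil => simp [wSum]
  | cons a t ih => simp [wSum_cons, ih]

lemma wSum_add (h h' : V ⊕ E → A) (p : List (V × E)) :
    wSum (h + h') p = wSum h p + wSum h' p := by
  induction p with
  | nil => simp [wSum]
  | cons a t ih => simp only [wSum_cons, Pi.add_apply, ih]; abel

lemma wSum_neg (h : V ⊕ E → A) (p : List (V × E)) :
    wSum (-h) p = -wSum h p := by
  induction p with
  | nil => simp [wSum]
  | cons a t ih => simp only [wSum_cons, Pi.neg_apply, ih]; abel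

/-- A function `f : E → A` is balanced if the sum of its values along every closed
ttrail of `G` is zero. -/
def BalancedE (G : Multigraph V E) (f : E → A) : Prop :=
  ∀ x p, G.IsTtrail x x p → pathSum (0 : V → A) f p = 0

/-- A function `g : V → A` is balanceable if some `f : E → A` balances it, i.e. the
sum of the values of `g` and `f` along every closed ttrail of `G` is zero. -/
def Balanceable (G : Multigraph V E) (g : V → A) : Prop :=
  ∃ f : E → A, ∀ x p, G.IsTtrail x x p → pathSum g f p = 0

/-- A function `h : V ∪ E → A` is balanced if the sum of its values along every
closed ttrail of `G` is zero. -/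
def BalancedW (G : Multigraph V E) (h : V ⊕ E → A) : Prop :=
  ∀ x p, G.IsTtrail x x p → wSum h p = 0

/-- `H(E,A)` : the group of balanced functions from `E` to `A`. -/
def Hgroup (G : Multigraph V E) (A : Type*) [AddCommGroup A] : AddSubgroup (E → A) where
  carrier := {f | G.BalancedE f}
  zero_mem' := fun _ p _ => pathSum_zero p
  add_mem' := by
    intro f f' hf hf' x p hp
    have h := pathSum_add (0 : V → A) 0 f f' p
    rw [add_zero] at h
    rw [h, hf x p hp, hf' x p hp, add_zero]
  neg_mem' := by
    intro f hf x p hp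
    have h := pathSum_neg (0 : V → A) f p
    rw [neg_zero] at h
    rw [h, hf x p hp, neg_zero]

/-- `B(V,A)` : the group of balanceable functions from `V` to `A`. -/
def Bgroup (G : Multigraph V E) (A : Type*) [AddCommGroup A] : AddSubgroup (V → A) where
  carrier := {g | G.Balanceable g}
  zero_mem' := ⟨0, fun _ p _ => pathSum_zero p⟩
  add_mem' := by
    rintro g g' ⟨f, hf⟩ ⟨f', hf'⟩
    exact ⟨f + f', fun x p hp => by rw [pathSum_add, hf x p hp, hf' x p hp, add_zero]⟩
  neg_mem' := by
    rintro g ⟨f, hf⟩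
    exact ⟨-f, fun x p hp => by rw [pathSum_neg, hf x p hp, neg_zero]⟩

/-- `W(V ∪ E, A)` : the group of balanced functions from `V ∪ E` to `A`. -/
def Wgroup (G : Multigraph V E) (A : Type*) [AddCommGroup A] : AddSubgroup (V ⊕ E → A) where
  carrier := {h | G.BalancedW h}
  zero_mem' := fun _ p _ => wSum_zero p
  add_mem' := by
    intro h h' hh hh' x p hp
    rw [wSum_add, hh x p hp, hh' x p hp, add_zero]
  neg_mem' := by
    intro h hh x p hp
    rw [wSum_neg, hh x p hp, neg_zero]

end Balanced

/-- A `3`-weakly closed ttrail (a ttrail between `3`-edge-connected vertices) which is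
short: no inner vertex is `3`-edge-connected to the initial vertex. -/
def ShortW (G : Multigraph V E) (x y : V) (p : List (V × E)) : Prop :=
  G.IsTtrail x y p ∧ G.KConn 3 x y ∧ ∀ v ∈ (p.map Prod.fst).tail, ¬ G.KConn 3 v x

/-- `G.ShortChain x y L` : `L` is a list of nontrivial short `3`-weakly closed ttrails
which concatenate into a ttrail from `x` to `y`. -/
def ShortChain (G : Multigraph V E) : V → V → List (List (V × E)) → Prop
  | x, y, [] => x = y
  | x, y, s :: rest => s ≠ [] ∧ ∃ z, G.ShortW x z s ∧ G.ShortChain z y rest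

/-- `A₂` : the subgroup of elements of order dividing `2` in `A`. -/
def torsion2 (A : Type*) [AddCommGroup A] : AddSubgroup A where
  carrier := {a | 2 • a = 0}
  zero_mem' := by simp
  add_mem' := by
    intro a b ha hb
    simp only [Set.mem_setOf_eq] at *
    rw [smul_add, ha, hb, add_zero]
  neg_mem' := by
    intro a ha
    simp only [Set.mem_setOf_eq] at *
    rw [smul_neg, ha, neg_zero]

/-- `2A` : the image of the doubling map `a ↦ 2a`. -/
def double2 (A : Type*) [AddCommGroup A] : AddSubgroup A where
  carrier := {b | ∃ a, b = 2 • a}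
  zero_mem' := ⟨0, by simp⟩
  add_mem' := by
    rintro a b ⟨x, rfl⟩ ⟨y, rfl⟩
    exact ⟨x + y, by rw [smul_add]⟩
  neg_mem' := by
    rintro a ⟨x, rfl⟩
    exact ⟨-x, by rw [smul_neg]⟩

end Multigraph

namespace Multigraph

variable {V E : Type*} [Fintype V] [Fintype E] [DecidableEq V] [DecidableEq E]


lemma z2_cases (x : ZMod 2) : x = 0 ∨ x = 1 := by revert x; decide

lemma fn_add_self {X : Type*} (c : X → ZMod 2) : c + c = 0 := by
  funext x; exact CharTwo.add_self_eq_zero _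

lemma boundary_single (G : Multigraph V E) {e : E} {a b : V} (h : G.ends e = s(a, b)) :
    G.boundary (Pi.single e 1) = vert a + vert b := by
  funext v
  simp only [boundary, LinearMap.coe_mk, AddHom.coe_mk, Pi.add_apply, vert]
  rw [Finset.sum_eq_single e]
  · simp [edgeVec, h]
  · intro e' _ hne; simp [hne]
  · simp

lemma vert_tri (a u b : V) : vert a + vert u + (vert u + vert b) = vert a + vert b := by
  have := fn_add_self (vert u)
  calc _ = vert a + (vert u + vert u) + vert b := by abel
    _ = _ := by rw [this, add_zero]

lemma exists_edge (G : Multigraph V E) {c : E → ZMod 2} {a b : V} (hab : a ≠ b)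
    (h : G.boundary c = vert a + vert b) : ∃ e u, c e = 1 ∧ G.ends e = s(a, u) := by
  have h1 : G.boundary c a = 1 := by rw [h]; simp [vert, hab]
  have h2 : ∑ e, c e * G.edgeVec e a ≠ 0 := by
    change G.boundary c a ≠ 0
    rw [h1]; decide
  obtain ⟨e, _, he⟩ := Finset.exists_ne_zero_of_sum_ne_zero h2
  have hc : c e = 1 := (z2_cases (c e)).resolve_left (left_ne_zero_of_mul he)
  have hv := right_ne_zero_of_mul he
  obtain ⟨x, y, hxy⟩ : ∃ x y, G.ends e = s(x, y) := by
    induction hh : G.ends e using Sym2.ind with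
    | _ x y => exact ⟨x, y, rfl⟩
  simp only [edgeVec, hxy, Sym2.lift_mk] at hv
  by_cases hx : a = x
  · exact ⟨e, y, hc, by rw [hxy, hx]⟩
  · by_cases hy : a = y
    · exact ⟨e, x, hc, by rw [hxy, hy, Sym2.eq_swap]⟩
    · simp [hx, hy] at hv

lemma card_lt (c : E → ZMod 2) {e : E} (he : c e = 1) :
    #{x | (c + Pi.single e 1 : E → ZMod 2) x = 1} < #{x | c x = 1} := by
  apply Finset.card_lt_card
  rw [Finset.ssubset_iff_of_subset]
  · refine ⟨e, by simpa using he, ?_⟩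
    simp only [Finset.mem_filter, Finset.mem_univ, true_and, Pi.add_apply, Pi.single_eq_same, he]
    decide
  · intro x hx
    simp only [Finset.mem_filter, Finset.mem_univ, true_and, Pi.add_apply] at hx ⊢
    by_cases hxe : x = e
    · rw [hxe, he]
    · simpa [hxe] using hx

lemma exists_trail (G : Multigraph V E) : ∀ (n : ℕ) (c : E → ZMod 2) (a b : V),
    #{x | c x = 1} ≤ n → G.boundary c = vert a + vert b →
    ∃ p, G.IsTtrail a b p ∧ ∀ e ∈ p.map Prod.snd, c e = 1 := by
  intro n
  induction n with
  | zero =>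
    intro c a b hn h
    by_cases hab : a = b
    · exact ⟨[], ⟨hab, by simp⟩, by simp⟩
    · obtain ⟨e, u, he, _⟩ := exists_edge G hab h
      have := card_lt c he
      omega
  | succ n ih =>
    intro c a b hn h
    by_cases hab : a = b
    · exact ⟨[], ⟨hab, by simp⟩, by simp⟩
    · obtain ⟨e, u, he, hu⟩ := exists_edge G hab h
      have hlt := card_lt c he
      obtain ⟨p, hp, hpc⟩ := ih (c + Pi.single e 1) u b (by omega) (by
        rw [map_add, h, boundary_single G hu, add_comm, add_comm (vert a) (vert u), vert_tri])
      have hne : ∀ x ∈ p.map Prod.snd, x ≠ e := by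
        intro x hx hxe
        have := hpc x hx
        rw [hxe, Pi.add_apply, he, Pi.single_eq_same] at this
        revert this; decide
      refine ⟨(a, e) :: p, ⟨⟨rfl, u, hu, hp.1⟩, ?_⟩, ?_⟩
      · rw [List.map_cons, List.nodup_cons]
        exact ⟨fun hm => hne _ hm rfl, hp.2⟩
      · intro x hx
        rw [List.map_cons, List.mem_cons] at hx
        rcases hx with rfl | hx
        · exact he
        · have := hpc x hx
          simpa [hne x hx] using this

lemma trail_of (G : Multigraph V E) {c : E → ZMod 2} {a b : V}
    (h : G.boundary c = vert a + vert b) :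
    ∃ p, G.IsTtrail a b p ∧ ∀ e ∈ p.map Prod.snd, c e = 1 :=
  exists_trail G _ c a b le_rfl h

lemma eps_cons {a : V} {e : E} {p : List (V × E)} (h : e ∉ p.map Prod.snd) :
    eps ((a, e) :: p) = Pi.single e 1 + eps p := by
  funext x
  simp only [eps, List.map_cons, List.mem_cons, Pi.add_apply]
  by_cases hx : x = e
  · subst hx; rw [if_pos (Or.inl rfl), if_neg h]; simp
  · simp [hx]

lemma eps_one {p : List (V × E)} {e : E} : eps p e = 1 ↔ e ∈ p.map Prod.snd := by
  unfold eps
  split_ifs with h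
  · simp only [h]
  · simp only [h, iff_false]; decide

lemma boundary_eps (G : Multigraph V E) : ∀ (p : List (V × E)) (a b : V),
    G.IsTtrail a b p → G.boundary (eps p) = vert a + vert b := by
  intro p
  induction p with
  | nil =>
    rintro a b ⟨h, _⟩
    have hab : a = b := h
    have : eps ([] : List (V × E)) = 0 := by funext x; simp [eps]
    rw [this, hab, map_zero, fn_add_self]
  | cons ve p ih =>
    obtain ⟨v, e⟩ := ve
    rintro a b ⟨⟨rfl, w, hw, hc⟩, hn⟩
    rw [List.map_cons, List.nodup_cons] at hn
    rw [eps_cons hn.1, map_add, boundary_single G hw, ih w b ⟨hc, hn.2⟩, vert_tri]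

section fS
variable {A : Type*} [AddCommGroup A] (f : E → A)

lemma fSum_add (c d : E → ZMod 2) :
    fSum f (c + d) + 2 • fSum f (c * d) = fSum f c + fSum f d := by
  simp only [fSum, Finset.sum_filter, Finset.smul_sum]
  rw [← Finset.sum_add_distrib, ← Finset.sum_add_distrib]
  apply Finset.sum_congr rfl
  intro e _
  have h11 : ¬ ((1 : ZMod 2) + 1 = 1) := by decide
  have h01 : ¬ ((0 : ZMod 2) = 1) := by decide
  simp only [Pi.add_apply, Pi.mul_apply]
  rcases z2_cases (c e) with h | h <;> rcases z2_cases (d e) with h' | h' <;>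
    simp [h, h', h11, h01, two_nsmul]

lemma fSum_zero : fSum f 0 = 0 := by simp [fSum]

lemma fSum_disj {c d : E → ZMod 2} (h : c * d = 0) : fSum f (c + d) = fSum f c + fSum f d := by
  have := fSum_add f c d
  rwa [h, fSum_zero, smul_zero, add_zero] at this

lemma fSum_eps : ∀ (p : List (V × E)), (p.map Prod.snd).Nodup →
    fSum f (eps p) = pathSum (0 : V → A) f p := by
  intro p
  induction p with
  | nil =>
    intro _
    simp [fSum, eps, pathSum]
  | cons ve p ih =>
    obtain ⟨v, e⟩ := ve
    intro hn
    rw [List.map_cons, List.nodup_cons] at hn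
    rw [eps_cons hn.1, fSum_disj, ih hn.2, pathSum_cons]
    · congr 1
      simp only [fSum, Finset.sum_filter]
      rw [Finset.sum_eq_single e]
      · simp
      · intro x _ hx; simp [hx]
      · simp
    · funext x
      by_cases hx : x = e
      · subst hx
        simp [eps, hn.1]
      · simp [hx]

lemma balanced_of (G : Multigraph V E) (h : ∀ c ∈ G.cycleSpace, fSum f c = 0) :
    G.BalancedE f := by
  intro x p hp
  rw [← fSum_eps f p hp.2]
  apply h
  rw [cycleSpace, LinearMap.mem_ker, boundary_eps G p x x hp, fn_add_self]

lemma cycle_zero (G : Multigraph V E) (h : G.BalancedE f) : ∀ (n : ℕ) (c : E → ZMod 2),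
    #{x | c x = 1} ≤ n → G.boundary c = 0 → fSum f c = 0 := by
  intro n
  induction n with
  | zero =>
    intro c hc _
    have : (Finset.univ.filter fun e => c e = 1) = ∅ := by
      rw [← Finset.card_eq_zero]; omega
    rw [fSum, this, Finset.sum_empty]
  | succ n ih =>
    intro c hc hb
    by_cases hex : ∃ e, c e = 1
    · obtain ⟨e, he⟩ := hex
      obtain ⟨x, y, hxy⟩ : ∃ x y, G.ends e = s(x, y) := by
        induction hh : G.ends e using Sym2.ind with
        | _ x y => exact ⟨x, y, rfl⟩
      have hb' : G.boundary (c + Pi.single e 1) = vert y + vert x := by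
        rw [map_add, hb, boundary_single G hxy, zero_add, add_comm]
      obtain ⟨p, hp, hpc⟩ := trail_of G hb'
      have hne : e ∉ p.map Prod.snd := by
        intro hx
        have := hpc e hx
        rw [Pi.add_apply, he, Pi.single_eq_same] at this
        revert this; decide
      have hq : G.IsTtrail x x ((x, e) :: p) := by
        refine ⟨⟨rfl, y, hxy, hp.1⟩, ?_⟩
        rw [List.map_cons, List.nodup_cons]
        exact ⟨hne, hp.2⟩
      have hqc : ∀ g, eps ((x, e) :: p) g = 1 → c g = 1 := by
        intro g hg
        rw [eps_one, List.map_cons, List.mem_cons] at hg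
        rcases hg with rfl | hg
        · exact he
        · have := hpc g hg
          have hge : g ≠ e := fun hh => hne (hh ▸ hg)
          simpa [hge] using this
      set q := eps ((x, e) :: p) with hqdef
      have hqe : q e = 1 := by rw [hqdef, eps_one]; simp
      have hsub : ∀ g, (c + q) g = 1 → c g = 1 := by
        intro g hg
        rcases z2_cases (q g) with h0 | h1
        · simpa [h0] using hg
        · exact hqc g h1
      have hcard : #{g | (c + q) g = 1} < #{g | c g = 1} := by
        apply Finset.card_lt_card
        rw [Finset.ssubset_iff_of_subset]
        · refine ⟨e, by simpa using he, ?_⟩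
          simp only [Finset.mem_filter, Finset.mem_univ, true_and, Pi.add_apply, he, hqe]
          decide
        · intro g hg
          simp only [Finset.mem_filter, Finset.mem_univ, true_and] at hg ⊢
          exact hsub g hg
      have h1 := ih (c + q) (by omega) (by
        rw [map_add, hb, boundary_eps G _ x x hq, fn_add_self, add_zero])
      have h2 : fSum f q = 0 := by
        rw [hqdef, fSum_eps f _ hq.2]; exact h x _ hq
      have h3 : c = (c + q) + q := by rw [add_assoc, fn_add_self, add_zero]
      rw [h3, fSum_disj, h1, h2, add_zero]
      funext g
      simp only [Pi.mul_apply, Pi.add_apply, Pi.zero_apply]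
      rcases z2_cases (q g) with h0 | h0
      · rw [h0, mul_zero]
      · rw [h0, hqc g h0]; decide
    · push Not at hex
      have : (Finset.univ.filter fun e => c e = 1) = ∅ := by
        ext e; simp [hex e]
      rw [fSum, this, Finset.sum_empty]

end fS

lemma touch (G : Multigraph V E) : ∀ (p : List (V × E)) (u b y : V), G.IsTtrail u b p →
    (∃ e ∈ p.map Prod.snd, y ∈ G.ends e) →
    ∃ c, G.boundary c = vert y + vert b ∧ ∀ e, c e = 1 → e ∈ p.map Prod.snd := by
  intro p
  induction p with
  | nil => rintro u b y _ ⟨e, he, _⟩; simp at he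
  | cons ve p ih =>
    obtain ⟨v, g⟩ := ve
    rintro u b y hp ⟨e, he, hy⟩
    have hp0 := hp
    obtain ⟨⟨rfl, w, hw, hc⟩, hn⟩ := hp
    rw [List.map_cons, List.nodup_cons] at hn
    rw [List.map_cons, List.mem_cons] at he
    rcases he with rfl | he
    · rw [hw, Sym2.mem_iff] at hy
      rcases hy with rfl | rfl
      · exact ⟨_, boundary_eps G _ _ _ hp0, fun e he => eps_one.1 he⟩
      · exact ⟨_, boundary_eps G p _ b ⟨hc, hn.2⟩, fun e he => by
          rw [List.map_cons]; exact List.mem_cons_of_mem _ (eps_one.1 he)⟩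
    · obtain ⟨c, h1, h2⟩ := ih w b y ⟨hc, hn.2⟩ ⟨e, he, hy⟩
      exact ⟨c, h1, fun e he => by rw [List.map_cons]; exact List.mem_cons_of_mem _ (h2 e he)⟩

lemma first_hit (G : Multigraph V E) {u b : V} {t1 t2 : List (V × E)}
    (h1 : G.IsTtrail u b t1) (h2 : G.IsTtrail u b t2) : ∀ (r : List (V × E)) (a : V),
    G.IsChain a b r → ∃ s, G.boundary s = vert a + vert b ∧
      ((∀ e, s e = 1 → (e ∈ r.map Prod.snd ∨ e ∈ t1.map Prod.snd) ∧
          (e ∈ t2.map Prod.snd → e ∈ t1.map Prod.snd)) ∨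
       (∀ e, s e = 1 → (e ∈ r.map Prod.snd ∨ e ∈ t2.map Prod.snd) ∧
          (e ∈ t1.map Prod.snd → e ∈ t2.map Prod.snd))) := by
  intro r
  induction r with
  | nil =>
    intro a hab
    have hab : a = b := hab
    refine ⟨0, by rw [hab, map_zero, fn_add_self], Or.inl ?_⟩
    intro e he; simp at he
  | cons ve r ih =>
    obtain ⟨v, g⟩ := ve
    rintro a ⟨rfl, w, hw, hc⟩
    by_cases ht1 : ∃ e ∈ t1.map Prod.snd, v ∈ G.ends e
    · obtain ⟨c, hc1, hc2⟩ := touch G t1 u b v h1 ht1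
      exact ⟨c, hc1, Or.inl fun e he => ⟨Or.inr (hc2 e he), fun _ => hc2 e he⟩⟩
    by_cases ht2 : ∃ e ∈ t2.map Prod.snd, v ∈ G.ends e
    · obtain ⟨c, hc1, hc2⟩ := touch G t2 u b v h2 ht2
      exact ⟨c, hc1, Or.inr fun e he => ⟨Or.inr (hc2 e he), fun _ => hc2 e he⟩⟩
    have hv : v ∈ G.ends g := by rw [hw]; simp
    have hg1 : g ∉ t1.map Prod.snd := fun h => ht1 ⟨g, h, hv⟩
    have hg2 : g ∉ t2.map Prod.snd := fun h => ht2 ⟨g, h, hv⟩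
    obtain ⟨s, hs, hss⟩ := ih w hc
    refine ⟨Pi.single g 1 + s, by rw [map_add, boundary_single G hw, hs, vert_tri], ?_⟩
    rw [List.map_cons]
    rcases hss with hss | hss
    · left
      intro e he
      by_cases hge : e = g
      · subst hge
        exact ⟨Or.inl List.mem_cons_self, fun h => absurd h hg2⟩
      · have := hss e (by simpa [hge] using he)
        exact ⟨this.1.imp_left (List.mem_cons_of_mem _), this.2⟩
    · right
      intro e he
      by_cases hge : e = g
      · subst hge
        exact ⟨Or.inl List.mem_cons_self, fun h => absurd h hg1⟩
      · have := hss e (by simpa [hge] using he)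
        exact ⟨this.1.imp_left (List.mem_cons_of_mem _), this.2⟩

lemma two_paths (G : Multigraph V E) (K : E → Prop) (e0 : E) (b : V) :
    ∀ (p : List (V × E)) (a : V), G.IsTtrail a b p → e0 ∉ p.map Prod.snd →
    (∀ d, ¬ K d → ∃ r, G.boundary r = vert a + vert b ∧ r d = 0 ∧ r e0 = 0) →
    ∃ c1 c2, G.boundary c1 = vert a + vert b ∧ G.boundary c2 = vert a + vert b ∧
      c1 e0 = 0 ∧ c2 e0 = 0 ∧ ∀ e, c1 e = 1 → c2 e = 1 → K e := by
  intro p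
  have h01 : ∀ x : ZMod 2, x ≠ 1 → x = 0 := fun x hx => (z2_cases x).resolve_right hx
  induction p with
  | nil =>
    rintro a ⟨hab, _⟩ _ _
    have hab : a = b := hab
    have : G.boundary 0 = vert a + vert b := by rw [hab, map_zero, fn_add_self]
    exact ⟨0, 0, this, this, rfl, rfl, fun e he => by simp at he⟩
  | cons ve p ih =>
    obtain ⟨v, d⟩ := ve
    rintro a ⟨⟨rfl, u, hu, hc⟩, hn⟩ he0 hr
    rw [List.map_cons, List.nodup_cons] at hn
    rw [List.map_cons, List.mem_cons, not_or] at he0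
    have hed : e0 ≠ d := he0.1
    have hds := boundary_single G hu
    obtain ⟨c1, c2, b1, b2, z1, z2, hK⟩ := ih u ⟨hc, hn.2⟩ he0.2 (by
      intro d' hd'
      by_cases hdd : d' = d
      · refine ⟨eps p, boundary_eps G p u b ⟨hc, hn.2⟩, ?_, ?_⟩
        · rw [hdd]; exact h01 _ fun h => hn.1 (eps_one.1 h)
        · exact h01 _ fun h => he0.2 (eps_one.1 h)
      · obtain ⟨r, r1, r2, r3⟩ := hr d' hd'
        refine ⟨Pi.single d 1 + r, ?_, by simp [hdd, r2], by simp [hed, r3]⟩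
        rw [map_add, hds, r1, add_comm (vert v) (vert u), vert_tri])
    have key : (K d ∨ c1 d = 1 ∨ c2 d = 1) → ∃ c1 c2, G.boundary c1 = vert v + vert b ∧
        G.boundary c2 = vert v + vert b ∧
        c1 e0 = 0 ∧ c2 e0 = 0 ∧ ∀ e, c1 e = 1 → c2 e = 1 → K e := by
      intro h
      refine ⟨Pi.single d 1 + c1, Pi.single d 1 + c2, by rw [map_add, hds, b1, vert_tri],
        by rw [map_add, hds, b2, vert_tri], by simp [hed, z1], by simp [hed, z2], ?_⟩
      intro e h1 h2
      by_cases hde : e = d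
      · subst hde
        rcases h with h | h | h
        · exact h
        · rw [Pi.add_apply, h, Pi.single_eq_same] at h1; exact absurd h1 (by decide)
        · rw [Pi.add_apply, h, Pi.single_eq_same] at h2; exact absurd h2 (by decide)
      · exact hK e (by simpa [hde] using h1) (by simpa [hde] using h2)
    by_cases hd : K d ∨ c1 d = 1 ∨ c2 d = 1
    · exact key hd
    push Not at hd
    obtain ⟨hKd, hd1, hd2⟩ := hd
    obtain ⟨r, r1, r2, r3⟩ := hr d hKd
    obtain ⟨t1, ht1, hs1⟩ := trail_of G b1
    obtain ⟨t2, ht2, hs2⟩ := trail_of G b2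
    obtain ⟨q, hq, hqs⟩ := trail_of G r1
    have main : ∀ (t1 t2 : List (V × E)) (s : E → ZMod 2), G.IsTtrail u b t2 →
        (∀ e ∈ t1.map Prod.snd, e ≠ d ∧ e ≠ e0) → (∀ e ∈ t2.map Prod.snd, e ≠ d ∧ e ≠ e0) →
        (∀ e, e ∈ t1.map Prod.snd → e ∈ t2.map Prod.snd → K e) →
        G.boundary s = vert v + vert b →
        (∀ e, s e = 1 → (e ∈ q.map Prod.snd ∨ e ∈ t1.map Prod.snd) ∧
          (e ∈ t2.map Prod.snd → e ∈ t1.map Prod.snd)) →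
        ∃ c1 c2, G.boundary c1 = vert v + vert b ∧
        G.boundary c2 = vert v + vert b ∧
        c1 e0 = 0 ∧ c2 e0 = 0 ∧ ∀ e, c1 e = 1 → c2 e = 1 → K e := by
      intro t1 t2 s ht2 n1 n2 hKK hs hss
      have hsn : ∀ e, s e = 1 → e ≠ d ∧ e ≠ e0 := by
        intro e he
        rcases (hss e he).1 with h | h
        · have := hqs e h
          constructor
          · rintro rfl; rw [r2] at this; revert this; decide
          · rintro rfl; rw [r3] at this; revert this; decide
        · exact n1 e h
      refine ⟨s, Pi.single d 1 + eps t2, hs,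
        by rw [map_add, hds, boundary_eps G t2 u b ht2, vert_tri],
        h01 _ fun h => (hsn e0 h).2 rfl, ?_, ?_⟩
      · have : eps t2 e0 = 0 := h01 _ fun h => (n2 e0 (eps_one.1 h)).2 rfl
        simp [hed, this]
      · intro e h1 h2
        have hne := (hsn e h1).1
        have h3 : eps t2 e = 1 := by simpa [hne] using h2
        have h4 := eps_one.1 h3
        exact hKK e ((hss e h1).2 h4) h4
    have n1 : ∀ e ∈ t1.map Prod.snd, e ≠ d ∧ e ≠ e0 := by
      intro e he
      have := hs1 e he
      constructor
      · rintro rfl; exact hd1 this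
      · rintro rfl; rw [z1] at this; revert this; decide
    have n2 : ∀ e ∈ t2.map Prod.snd, e ≠ d ∧ e ≠ e0 := by
      intro e he
      have := hs2 e he
      constructor
      · rintro rfl; exact hd2 this
      · rintro rfl; rw [z2] at this; revert this; decide
    obtain ⟨s, hs, hss | hss⟩ := first_hit G ht1 ht2 q v hq.1
    · exact main t1 t2 s ht2 n1 n2 (fun e h1 h2 => hK e (hs1 e h1) (hs2 e h2)) hs hss
    · exact main t2 t1 s ht1 n2 n1 (fun e h1 h2 => hK e (hs1 e h2) (hs2 e h1)) hs hss

/-- Two edges lie in the same cycles. -/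
def Par (G : Multigraph V E) (e d : E) : Prop := ∀ z, G.boundary z = 0 → z e = z d

lemma par_prod (G : Multigraph V E) {e : E} {z0 : E → ZMod 2} (hz0 : G.boundary z0 = 0)
    (he : z0 e = 1) : ∃ z1 z2, G.boundary z1 = 0 ∧ G.boundary z2 = 0 ∧
      ∀ d, (z1 * z2) d = 1 ↔ G.Par e d := by
  obtain ⟨x, y, hxy⟩ : ∃ x y, G.ends e = s(x, y) := by
    induction hh : G.ends e using Sym2.ind with
    | _ x y => exact ⟨x, y, rfl⟩
  have h11 : (1 : ZMod 2) + 1 = 0 := by decide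
  have hb : ∀ z, G.boundary z = 0 → G.boundary (z + Pi.single e 1) = vert x + vert y := by
    intro z hz
    rw [map_add, hz, boundary_single G hxy, zero_add]
  obtain ⟨p, hp, hpc⟩ := trail_of G (hb z0 hz0)
  have hne : e ∉ p.map Prod.snd := by
    intro hx
    have := hpc e hx
    rw [Pi.add_apply, he, Pi.single_eq_same] at this
    revert this; decide
  obtain ⟨c1, c2, b1, b2, z1, z2, hK⟩ := two_paths G (G.Par e) e y p x hp hne (by
    intro d hd
    have : ∃ z, G.boundary z = 0 ∧ z e = 1 ∧ z d = 0 := by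
      unfold Par at hd
      push Not at hd
      obtain ⟨z, hz, hzz⟩ := hd
      rcases z2_cases (z e) with h | h
      · have h' : z d = 1 := (z2_cases _).resolve_left fun h' => hzz (by rw [h, h'])
        rcases z2_cases (z0 d) with h0 | h0
        · exact ⟨z0, hz0, he, h0⟩
        · exact ⟨z0 + z, by rw [map_add, hz0, hz, add_zero], by simp [he, h],
            by rw [Pi.add_apply, h0, h', h11]⟩
      · exact ⟨z, hz, h, (z2_cases _).resolve_right fun h' => hzz (by rw [h, h'])⟩
    obtain ⟨z, hz, h1, h2⟩ := this
    have hde : d ≠ e := by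
      rintro rfl
      exact hd fun _ _ => rfl
    exact ⟨z + Pi.single e 1, hb z hz, by simp [hde, h2], by simp [h1, h11]⟩)
  have hc : ∀ c, G.boundary c = vert x + vert y → G.boundary (c + Pi.single e 1) = 0 := by
    intro c hc
    rw [map_add, hc, boundary_single G hxy, fn_add_self]
  refine ⟨c1 + Pi.single e 1, c2 + Pi.single e 1, hc c1 b1, hc c2 b2, ?_⟩
  intro d
  constructor
  · intro h
    by_cases hde : d = e
    · subst hde; exact fun _ _ => rfl
    · have h' : c1 d * c2 d = 1 := by simpa [hde] using h
      apply hK d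
      · rcases z2_cases (c1 d) with h0 | h0
        · rw [h0, zero_mul] at h'; exact absurd h' (by decide)
        · exact h0
      · rcases z2_cases (c2 d) with h0 | h0
        · rw [h0, mul_zero] at h'; exact absurd h' (by decide)
        · exact h0
  · intro h
    rw [Pi.mul_apply, ← h _ (hc c1 b1), ← h _ (hc c2 b2)]
    simp [z1, z2]

lemma par_sum {A : Type*} [AddCommGroup A] (f : E → A) (G : Multigraph V E)
    (hf : ∀ c, G.boundary c = 0 → fSum f c = 0) : ∀ (n : ℕ) (c : E → ZMod 2),
    #{x | c x = 1} ≤ n → (∀ e, (∀ z, G.boundary z = 0 → z e = 0) → c e = 0) →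
    (∀ e d, G.Par e d → c e = c d) → 2 • fSum f c = 0 := by
  intro n
  induction n with
  | zero =>
    intro c hc _ _
    have : (Finset.univ.filter fun e => c e = 1) = ∅ := by
      rw [← Finset.card_eq_zero]; omega
    rw [fSum, this, Finset.sum_empty, smul_zero]
  | succ n ih =>
    intro c hc hz hp
    by_cases hex : ∃ e, c e = 1
    · obtain ⟨e, he⟩ := hex
      have hzz : ∃ z0, G.boundary z0 = 0 ∧ z0 e = 1 := by
        by_contra hno
        push Not at hno
        have := hz e fun z hz => (z2_cases _).resolve_right (hno z hz)
        rw [he] at this; revert this; decide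
      obtain ⟨z0, hz0, hz0e⟩ := hzz
      obtain ⟨z1, z2, h1, h2, hK⟩ := par_prod G hz0 hz0e
      set k := z1 * z2 with hk
      have hke : k e = 1 := (hK e).2 fun _ _ => rfl
      have hkc : ∀ d, k d = 1 → c d = 1 := fun d hd => by rw [← hp e d ((hK d).1 hd), he]
      have hk2 : 2 • fSum f k = 0 := by
        have := fSum_add f z1 z2
        rwa [hf z1 h1, hf z2 h2, hf (z1 + z2) (by rw [map_add, h1, h2, add_zero]), zero_add,
          add_zero] at this
      have hcard : #{g | (c + k) g = 1} < #{g | c g = 1} := by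
        apply Finset.card_lt_card
        rw [Finset.ssubset_iff_of_subset]
        · refine ⟨e, by simpa using he, ?_⟩
          simp only [Finset.mem_filter, Finset.mem_univ, true_and, Pi.add_apply, he, hke]
          decide
        · intro g hg
          simp only [Finset.mem_filter, Finset.mem_univ, true_and] at hg ⊢
          rcases z2_cases (k g) with h0 | h0
          · simpa [h0] using hg
          · exact hkc g h0
      have h4 := ih (c + k) (by omega) (by
          intro g hg
          rw [Pi.add_apply, hz g hg, hk, Pi.mul_apply, hg z1 h1, zero_mul, add_zero]) (by
          intro g d hgd
          simp only [hk, Pi.add_apply, Pi.mul_apply]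
          rw [hp g d hgd, hgd z1 h1, hgd z2 h2])
      have h3 : c = (c + k) + k := by rw [add_assoc, fn_add_self, add_zero]
      rw [h3, fSum_disj, smul_add, h4, hk2, add_zero]
      funext g
      simp only [Pi.mul_apply (f := c + k), Pi.add_apply, Pi.zero_apply]
      rcases z2_cases (k g) with h0 | h0
      · rw [h0, mul_zero]
      · rw [h0, hkc g h0]; decide
    · push Not at hex
      have : (Finset.univ.filter fun e => c e = 1) = ∅ := by
        ext e; simp [hex e]
      rw [fSum, this, Finset.sum_empty, smul_zero]

lemma weak_prop (G : Multigraph V E) {c : E → ZMod 2} (hc : G.IsWeakCycle 3 c) :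
    ∃ z z1 z2, G.boundary z = 0 ∧ G.boundary z1 = 0 ∧ G.boundary z2 = 0 ∧ c = z + z1 * z2 := by
  obtain ⟨v, w, hvw, hb⟩ := hc
  rcases hvw with rfl | ⟨p, hp, hd⟩
  · exact ⟨c, 0, 0, by rw [hb, fn_add_self], map_zero _, map_zero _, by simp⟩
  · have hbp := fun i => boundary_eps G (p i) v w (hp i)
    have hdis : ∀ i j, i ≠ j → ∀ e, eps (p i) e * eps (p j) e = 0 := by
      intro i j hij e
      rcases z2_cases (eps (p i) e) with h | h
      · rw [h, zero_mul]
      · rcases z2_cases (eps (p j) e) with h' | h'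
        · rw [h', mul_zero]
        · exact absurd (eps_one.1 h') (hd i j hij e (eps_one.1 h))
    refine ⟨c + eps (p 0), eps (p 0) + eps (p 1), eps (p 0) + eps (p 2), ?_, ?_, ?_, ?_⟩
    · rw [map_add, hb, hbp, fn_add_self]
    · rw [map_add, hbp, hbp, fn_add_self]
    · rw [map_add, hbp, hbp, fn_add_self]
    · funext e
      have h1 := hdis 0 1 (by decide) e
      have h2 := hdis 0 2 (by decide) e
      have h3 := hdis 1 2 (by decide) e
      simp only [Pi.add_apply, Pi.mul_apply]
      generalize eps (p 0) e = a at *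
      generalize eps (p 1) e = b at *
      generalize eps (p 2) e = d at *
      generalize c e = g at *
      revert h1 h2 h3
      revert a b d g
      decide

lemma span_prop (G : Multigraph V E) {c : E → ZMod 2} (hc : c ∈ G.weakCycleSpace 3) :
    (∀ e, (∀ z, G.boundary z = 0 → z e = 0) → c e = 0) ∧ (∀ e d, G.Par e d → c e = c d) := by
  unfold weakCycleSpace at hc
  induction hc using Submodule.span_induction with
  | mem c hc =>
    obtain ⟨z, z1, z2, h, h1, h2, rfl⟩ := weak_prop G hc
    refine ⟨fun e he => ?_, fun e d hed => ?_⟩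
    · simp [he z h, he z1 h1]
    · simp only [Pi.add_apply, Pi.mul_apply, hed z h, hed z1 h1, hed z2 h2]
  | zero => exact ⟨fun _ _ => rfl, fun _ _ _ => rfl⟩
  | add x y _ _ hx hy =>
    refine ⟨fun e he => ?_, fun e d hed => ?_⟩
    · simp [hx.1 e he, hy.1 e he]
    · simp only [Pi.add_apply, hx.2 e d hed, hy.2 e d hed]
  | smul a x _ hx =>
    refine ⟨fun e he => ?_, fun e d hed => ?_⟩
    · simp [hx.1 e he]
    · simp only [Pi.smul_apply, hx.2 e d hed]

theorem stmt10 (G : Multigraph V E) {A : Type*} [AddCommGroup A] (f : E → A) :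
    ((∀ c ∈ G.cycleSpace, fSum f c = 0) → G.BalancedE f) ∧
    (G.BalancedE f →
      (∀ c ∈ G.cycleSpace, fSum f c = 0) ∧
      ∀ c ∈ G.weakCycleSpace 3, fSum f c ∈ torsion2 A) := by
  refine ⟨balanced_of f G, fun h => ?_⟩
  have hf : ∀ c, G.boundary c = 0 → fSum f c = 0 := fun c hc => cycle_zero f G h _ c le_rfl hc
  refine ⟨fun c hc => hf c (LinearMap.mem_ker.1 hc), fun c hc => ?_⟩
  obtain ⟨h1, h2⟩ := span_prop G hc
  exact par_sum f G hf _ c le_rfl h1 h2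

end Multigraph
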